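/- Let A be a ring and let M be an endofinite A-module (i.e. M has finite composition length as a module over its endomorphism ring End_A(M)). Then for every finitely presented A-module X, the End_A(M)-module Hom_A(X,M) (with End_A(M) acting by postcomposition) has finite composition length, and the function χ_M sending X to ℓ_{End_A(M)}(Hom_A(X,M)) is a subadditive function: χ_M(X ⊕ Y) = χ_M(X) + χ_M(Y) for all finitely presented X, Y, and χ_M(X) + χ_M(Z) ≥ χ_M(Y) for every exact sequence X → Y → Z → 0 of finitely presented A-modules. -/

import Mathlib

/-- The composition length of a module (the length of a composition series,
zero if none exists). -/
noncomputable def compLength (R : Type) [Ring R] (M : Type) [AddCommGroup M] [Module R M] : ℕ := by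
  classical
  exact if h : ∃ s : CompositionSeries (Submodule R M), s.head = ⊥ ∧ s.last = ⊤ then
    h.choose.length else 0

/-- A module `M` is endofinite if it has finite composition length over its
endomorphism ring, which acts on `M` by application. -/
def IsEndofinite (A : Type) [Ring A] (M : Type) [AddCommGroup M] [Module A M] : Prop :=
  IsFiniteLength (Module.End A M) M

/-- The subadditive function `χ_M` associated to a module `M`:
`χ_M(X) = ℓ_{End_A(M)} Hom_A(X, M)`, where `End_A(M)` acts by postcomposition. -/
noncomputable def chiMod (A : Type) [Ring A] (M : Type) [AddCommGroup M] [Module A M]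
    (X : Type) [AddCommGroup X] [Module A X] : ℕ :=
  compLength (Module.End A M) (X →ₗ[A] M)

/-- A subadditive function on the finitely presented `A`-modules: it depends only on
the isomorphism class, is additive on direct sums, and satisfies
`χ(X) + χ(Z) ≥ χ(Y)` for every exact sequence `X → Y → Z → 0`. -/
def IsSubadditive (A : Type) [Ring A]
    (χ : (X : Type) → [AddCommGroup X] → [Module A X] → ℕ) : Prop :=
  (∀ (X Y : Type) [AddCommGroup X] [Module A X] [AddCommGroup Y] [Module A Y],
      Module.FinitePresentation A X → Module.FinitePresentation A Y →
      (X ≃ₗ[A] Y) → χ X = χ Y) ∧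
  (∀ (X Y : Type) [AddCommGroup X] [Module A X] [AddCommGroup Y] [Module A Y],
      Module.FinitePresentation A X → Module.FinitePresentation A Y →
      χ (X × Y) = χ X + χ Y) ∧
  (∀ (X Y Z : Type) [AddCommGroup X] [Module A X] [AddCommGroup Y] [Module A Y]
      [AddCommGroup Z] [Module A Z],
      Module.FinitePresentation A X → Module.FinitePresentation A Y →
      Module.FinitePresentation A Z →
      ∀ (f : X →ₗ[A] Y) (g : Y →ₗ[A] Z),
      Function.Exact f g → Function.Surjective g → χ Y ≤ χ X + χ Z)

/-- Membership in the additive locus `Adloc(χ)`: `Z` is finitely presented and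
`χ(X) - χ(Y) + χ(Z) = 0` for every short exact sequence `0 → X → Y → Z → 0` of
finitely presented modules. -/
def MemAdloc (A : Type) [Ring A]
    (χ : (X : Type) → [AddCommGroup X] → [Module A X] → ℕ)
    (Z : Type) [AddCommGroup Z] [Module A Z] : Prop :=
  Module.FinitePresentation A Z ∧
  ∀ (X Y : Type) [AddCommGroup X] [Module A X] [AddCommGroup Y] [Module A Y],
    Module.FinitePresentation A X → Module.FinitePresentation A Y →
    ∀ (f : X →ₗ[A] Y) (g : Y →ₗ[A] Z),
    Function.Injective f → Function.Exact f g → Function.Surjective g →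
    χ X + χ Z = χ Y

/-- The hypothesis that the finitely presented `A`-modules form an abelian category:
kernels of maps between finitely presented modules are finitely presented. -/
def FpAbelian (A : Type) [Ring A] : Prop :=
  ∀ (X Y : Type) [AddCommGroup X] [Module A X] [AddCommGroup Y] [Module A Y],
    Module.FinitePresentation A X → Module.FinitePresentation A Y →
    ∀ f : X →ₗ[A] Y, Module.FinitePresentation A (LinearMap.ker f)

/-!
A surjection `A ^ n → X` embeds `Hom_A(X, M)` into `Hom_A(A ^ n, M) ≃ M ^ n`, which has finite
length over `End_A(M)`. The contravariant functor `Hom_A(-, M)` is additive and left exact, so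
additivity of `χ_M`, and subadditivity along `X → Y → Z → 0`, are properties of length in the exact
sequence `0 → Hom_A(Z, M) → Hom_A(Y, M) → Hom_A(X, M)`.
-/

theorem coe_compLength {R : Type} [Ring R] {M : Type} [AddCommGroup M] [Module R M]
    (h : IsFiniteLength R M) : (compLength R M : ℕ∞) = Module.length R M := by
  have hs := isFiniteLength_iff_exists_compositionSeries.mp h
  rw [compLength, dif_pos hs]
  exact Module.length_compositionSeries _ hs.choose_spec.1 hs.choose_spec.2

theorem length_le_add_of_exact {R M N P : Type*} [Ring R] [AddCommGroup M] [AddCommGroup N]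
    [AddCommGroup P] [Module R M] [Module R N] [Module R P] {f : M →ₗ[R] N} {g : N →ₗ[R] P}
    (hfg : Function.Exact f g) : Module.length R N ≤ Module.length R M + Module.length R P := by
  have exact_ker_range : Function.Exact (LinearMap.ker g).subtype g.rangeRestrict := by
    rw [LinearMap.exact_iff, LinearMap.ker_rangeRestrict, Submodule.range_subtype]
  calc Module.length R N
      = Module.length R (LinearMap.ker g) + Module.length R (LinearMap.range g) :=
        Module.length_eq_add_of_exact _ _ (Submodule.subtype_injective _)
          g.surjective_rangeRestrict exact_ker_range
    _ = Module.length R (LinearMap.range f) + Module.length R (LinearMap.range g) := by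
        rw [hfg.linearMap_ker_eq]
    _ ≤ Module.length R M + Module.length R P :=
        add_le_add (Module.length_le_of_surjective _ f.surjective_rangeRestrict)
          (Module.length_le_of_injective _ (Submodule.subtype_injective _))

section Hom

variable {A S M X Y Z : Type*} [Ring A] [Ring S] [AddCommGroup M] [Module A M] [Module S M]
  [SMulCommClass A S M] [AddCommGroup X] [Module A X] [AddCommGroup Y] [Module A Y]
  [AddCommGroup Z] [Module A Z]

theorem isFiniteLength_linearMap [Module.Finite A X] (hM : IsFiniteLength S M) :
    IsFiniteLength S (X →ₗ[A] M) := by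
  obtain ⟨n, f, hf⟩ := Module.Finite.exists_fin' A X
  have finiteLength_pow : IsFiniteLength S (Fin n → M) := by
    obtain ⟨_, _⟩ := isFiniteLength_iff_isNoetherian_isArtinian.mp hM
    exact isFiniteLength_iff_isNoetherian_isArtinian.mpr ⟨inferInstance, inferInstance⟩
  have finiteLength_hom_free : IsFiniteLength S ((Fin n → A) →ₗ[A] M) :=
    (LinearEquiv.piRing A M (Fin n) S).symm.isFiniteLength finiteLength_pow
  exact finiteLength_hom_free.of_injective (LinearMap.lcomp_injective_of_surjective f hf)

theorem length_linearMap_prod :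
    Module.length S (X × Y →ₗ[A] M) =
      Module.length S (X →ₗ[A] M) + Module.length S (Y →ₗ[A] M) := by
  rw [← (LinearMap.coprodEquiv S).length_eq, Module.length_prod]

theorem exact_lcomp {f : X →ₗ[A] Y} {g : Y →ₗ[A] Z} (hfg : Function.Exact f g)
    (hg : Function.Surjective g) :
    Function.Exact (LinearMap.lcomp S M g) (LinearMap.lcomp S M f) := by
  intro φ
  constructor
  · intro hφ
    have range_le_ker : LinearMap.range f ≤ LinearMap.ker φ := LinearMap.range_le_ker_iff.mpr hφ
    refine ⟨(LinearMap.range f).liftQ φ range_le_ker ∘ₗ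
      (hfg.linearEquivOfSurjective hg).symm.toLinearMap, ?_⟩
    ext y
    simp
  · rintro ⟨ψ, rfl⟩
    ext x
    simp [hfg.apply_apply_eq_zero]

theorem length_linearMap_le_add_of_exact {f : X →ₗ[A] Y} {g : Y →ₗ[A] Z}
    (hfg : Function.Exact f g) (hg : Function.Surjective g) :
    Module.length S (Y →ₗ[A] M) ≤
      Module.length S (X →ₗ[A] M) + Module.length S (Z →ₗ[A] M) := by
  rw [add_comm]
  exact length_le_add_of_exact (exact_lcomp hfg hg)

end Hom

theorem statement0_general (A : Type) [Ring A] (S : Type) [Ring S] (M : Type) [AddCommGroup M]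
    [Module A M] [Module S M] [SMulCommClass A S M] (hM : IsFiniteLength S M) :
    (∀ (X : Type) [AddCommGroup X] [Module A X] [Module.Finite A X],
      IsFiniteLength S (X →ₗ[A] M)) ∧
    (∀ (X Y : Type) [AddCommGroup X] [Module A X] [AddCommGroup Y] [Module A Y]
      [Module.Finite A X], (X ≃ₗ[A] Y) →
      compLength S (X →ₗ[A] M) = compLength S (Y →ₗ[A] M)) ∧
    (∀ (X Y : Type) [AddCommGroup X] [Module A X] [AddCommGroup Y] [Module A Y]
      [Module.Finite A X] [Module.Finite A Y],
      compLength S (X × Y →ₗ[A] M) = compLength S (X →ₗ[A] M) + compLength S (Y →ₗ[A] M)) ∧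
    (∀ (X Y Z : Type) [AddCommGroup X] [Module A X] [AddCommGroup Y] [Module A Y]
      [AddCommGroup Z] [Module A Z] [Module.Finite A X] [Module.Finite A Z]
      (f : X →ₗ[A] Y) (g : Y →ₗ[A] Z), Function.Exact f g → Function.Surjective g →
      compLength S (Y →ₗ[A] M) ≤ compLength S (X →ₗ[A] M) + compLength S (Z →ₗ[A] M)) := by
  have finiteLength_hom (X : Type) [AddCommGroup X] [Module A X] [Module.Finite A X] :
      IsFiniteLength S (X →ₗ[A] M) := isFiniteLength_linearMap hM
  have coe_hom (X : Type) [AddCommGroup X] [Module A X] [Module.Finite A X] :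
      (compLength S (X →ₗ[A] M) : ℕ∞) = Module.length S (X →ₗ[A] M) :=
    coe_compLength (finiteLength_hom X)
  refine ⟨finiteLength_hom, fun X Y _ _ _ _ _ e ↦ ?_, fun X Y _ _ _ _ _ _ ↦ ?_,
    fun X Y Z _ _ _ _ _ _ _ _ f g hfg hg ↦ ?_⟩
  · have : Module.Finite A Y := .equiv e
    rw [← ENat.natCast_inj, coe_hom, coe_hom, (e.congrLeft M S).length_eq]
  · rw [← ENat.natCast_inj, ENat.natCast_add, coe_hom, coe_hom, coe_hom, length_linearMap_prod]
  · have : Module.Finite A Y := .of_exact hfg hg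
    rw [← ENat.natCast_le_natCast, ENat.natCast_add, coe_hom, coe_hom, coe_hom]
    exact length_linearMap_le_add_of_exact hfg hg

/-- For an endofinite `A`-module `M`, each `Hom_A(X, M)` with `X` finitely
presented has finite composition length over `End_A(M)`, and `χ_M` is a subadditive
function on the finitely presented `A`-modules. -/
theorem statement0 (A : Type) [Ring A] (M : Type) [AddCommGroup M] [Module A M]
    (hM : IsEndofinite A M) :
    (∀ (X : Type) [AddCommGroup X] [Module A X], Module.FinitePresentation A X →
      IsFiniteLength (Module.End A M) (X →ₗ[A] M)) ∧
    IsSubadditive A (chiMod A M) := by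
  obtain ⟨finiteLength, map_equiv, map_prod, le_of_exact⟩ :=
    statement0_general A (Module.End A M) M hM
  exact ⟨fun X _ _ _ ↦ finiteLength X, fun X Y _ _ _ _ _ _ ↦ map_equiv X Y,
    fun X Y _ _ _ _ _ _ ↦ map_prod X Y, fun X Y Z _ _ _ _ _ _ _ _ _ ↦ le_of_exact X Y Z⟩
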